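/- For z, w ∈ ℍ⁺, let C⁻¹(q) = (1+q)⁻¹(q−1) (the inverse Cayley map, mapping ℍ⁺ into 𝔹). Define k_𝔹(w', z') = (1 − 2 z' Re(w') + z'² ‖w'‖²)⁻¹ (1 − z' w') for w', z' ∈ 𝔹 (the reproducing kernel of the Hardy space H²(𝔹), i.e. (1 − q·conj(w'))^{−∗} evaluated at q = z'), and k_{ℍ⁺}(w, z) = (z² + 2 Re(w) z + ‖w‖²)⁻¹ (z + w) (the reproducing kernel of the Hardy space H²(ℍ⁺), i.e. (q + conj(w))^{−∗} evaluated at q = z). Then the kernel of H²(𝔹) is a rescaling of the kernel of H²(ℍ⁺): k_𝔹(C⁻¹(w), C⁻¹(z)) = (1/2)·(1 + z)·k_{ℍ⁺}(w, z)·(1 + conj(w)). (All quaternions inverted here are invertible: for z, w ∈ ℍ⁺ one has ‖C⁻¹(z)‖, ‖C⁻¹(w)‖ < 1 and z² + 2 Re(w) z + ‖w‖² ≠ 0.) -/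

import Mathlib

/-!
With `x = (1 + z)⁻¹` and `y = (1 + w)⁻¹` one has `C⁻¹(z) = 1 - 2x` and `C⁻¹(w) = 1 - 2y`, so the
numerator of `k_𝔹(C⁻¹(w), C⁻¹(z))` is `2(x + y - 2xy) = 2x(z + w)y`. Its denominator is a real
quadratic polynomial in `C⁻¹(z)`; clearing `x` turns it into a real quadratic polynomial in `z`, and
the values `‖1 - C⁻¹(w)‖²`, `1 - ‖C⁻¹(w)‖²`, `‖1 + C⁻¹(w)‖²` of its coefficients identify it with
the denominator of `k_{ℍ⁺}(w, z)` up to the factor `4‖1 + w‖⁻²`. Real polynomials in `z` commute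
with `z`, and `‖1 + w‖² (1 + w)⁻¹ = 1 + conj(w)`.
-/

noncomputable section

local notation "ℍ" => Quaternion ℝ

/-- The inverse Cayley map `C⁻¹(q) = (1+q)⁻¹(q−1)`, mapping the right half-space `ℍ⁺`
into the unit ball `𝔹`. -/
def CayleyInv (q : ℍ) : ℍ := (1 + q)⁻¹ * (q - 1)

/-- The reproducing kernel of the Hardy space `H²(𝔹)`, i.e. the pointwise value of
`(1 − q·conj(w'))^{−∗}` at `q = z'`. -/
def kernBall (w' z' : ℍ) : ℍ :=
  (1 - 2 * z' * (w'.re : ℍ) + z' ^ 2 * ((‖w'‖ ^ 2 : ℝ) : ℍ))⁻¹ * (1 - z' * w')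

/-- The reproducing kernel of the Hardy space `H²(ℍ⁺)`, i.e. the pointwise value of
`(q + conj(w))^{−∗}` at `q = z`. -/
def kernHalf (w z : ℍ) : ℍ :=
  (z ^ 2 + 2 * (w.re : ℍ) * z + ((‖w‖ ^ 2 : ℝ) : ℍ))⁻¹ * (z + w)

/-- The denominator of `kernBall`: the value at `z'` of the symmetrization
`(1 - q·conj(w'))^s = 1 - 2 q Re(w') + q² ‖w'‖²`. -/
def kernBallDenom (w' z' : ℍ) : ℍ :=
  1 - 2 * z' * (w'.re : ℍ) + z' ^ 2 * ((‖w'‖ ^ 2 : ℝ) : ℍ)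

/-- The denominator of `kernHalf`: the value at `z` of the symmetrization
`(q + conj(w))^s = q² + 2 Re(w) q + ‖w‖²`. -/
def kernHalfDenom (w z : ℍ) : ℍ :=
  z ^ 2 + 2 * (w.re : ℍ) * z + ((‖w‖ ^ 2 : ℝ) : ℍ)

lemma norm_one_add_sq (p : ℍ) : ‖1 + p‖ ^ 2 = 1 + 2 * p.re + ‖p‖ ^ 2 := by
  simp [norm_add_sq_real, Quaternion.inner_def]

lemma norm_one_sub_sq (p : ℍ) : ‖1 - p‖ ^ 2 = 1 - 2 * p.re + ‖p‖ ^ 2 := by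
  simp [norm_sub_sq_real, Quaternion.inner_def]

lemma one_add_ne_zero_of_re_pos {q : ℍ} (hq : 0 < q.re) : 1 + q ≠ 0 := fun h => by
  have hre : 1 + q.re = 0 := congrArg (·.re) h
  linarith

lemma norm_sq_smul_inv_eq_star (q : ℍ) : ‖q‖ ^ 2 • q⁻¹ = star q := by
  rcases eq_or_ne q 0 with rfl | hq
  · simp
  · rw [Quaternion.inv_def, Quaternion.normSq_eq_norm_mul_self, ← sq,
      smul_inv_smul₀ (pow_ne_zero 2 (norm_ne_zero_iff.mpr hq))]

lemma sq_add_smul_add_coe_ne_zero {z : ℍ} (hz : 0 < z.re) {a b : ℝ} (ha : 0 ≤ a) (hb : 0 ≤ b) :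
    z ^ 2 + a • z + (b : ℍ) ≠ 0 := fun h => by
  -- After multiplication by `conj(z)` all terms have nonnegative real part, `z ^ 2` a positive one.
  have hz0 : 0 < ‖z‖ := norm_pos_iff.mpr fun h0 => hz.ne' (congrArg (·.re) h0)
  have hstar : star z * z = ((‖z‖ ^ 2 : ℝ) : ℍ) := by
    rw [Quaternion.star_mul_self, Quaternion.normSq_eq_norm_mul_self, sq]
  have hexpand : star z * (z ^ 2 + a • z + (b : ℍ)) =
      ‖z‖ ^ 2 • z + ((a * ‖z‖ ^ 2 : ℝ) : ℍ) + b • star z := by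
    rw [mul_add, mul_add, sq, ← mul_assoc, mul_smul_comm, hstar, Quaternion.coe_mul_eq_smul,
      Quaternion.mul_coe_eq_smul, Quaternion.smul_coe]
  have hre : ‖z‖ ^ 2 * z.re + a * ‖z‖ ^ 2 + b * z.re = 0 := by
    simpa only [h, mul_zero, Quaternion.re_add, Quaternion.re_smul, Quaternion.re_coe,
      Quaternion.re_star, Quaternion.re_zero, smul_eq_mul] using (congrArg (·.re) hexpand).symm
  have hpos : 0 < ‖z‖ ^ 2 * z.re + a * ‖z‖ ^ 2 + b * z.re := by positivity
  exact hpos.ne' hre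

lemma kernHalfDenom_eq (w z : ℍ) :
    kernHalfDenom w z = z ^ 2 + (2 * w.re) • z + ((‖w‖ ^ 2 : ℝ) : ℍ) := by
  rw [kernHalfDenom, mul_assoc, Quaternion.coe_mul_eq_smul, two_mul, two_mul, add_smul]

lemma kernHalfDenom_ne_zero {w z : ℍ} (hw : 0 ≤ w.re) (hz : 0 < z.re) :
    kernHalfDenom w z ≠ 0 := by
  rw [kernHalfDenom_eq]
  exact sq_add_smul_add_coe_ne_zero hz (by positivity) (by positivity)

lemma commute_kernHalfDenom (w z : ℍ) : Commute z (kernHalfDenom w z) := by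
  rw [kernHalfDenom_eq]
  exact (((Commute.refl z).pow_right 2).add_right ((Commute.refl z).smul_right _)).add_right
    (Quaternion.coe_commute _ z).symm

section CayleyInv

variable {q : ℍ}

lemma one_add_mul_cayleyInv (hq : 1 + q ≠ 0) : (1 + q) * CayleyInv q = q - 1 :=
  mul_inv_cancel_left₀ hq _

lemma commute_one_add_cayleyInv (q : ℍ) : Commute (1 + q) (CayleyInv q) :=
  (Commute.refl (1 + q)).inv_right₀.mul_right <|
    (Commute.one_left _).add_left ((Commute.refl q).sub_right (Commute.one_right q))

lemma one_sub_cayleyInv (hq : 1 + q ≠ 0) : 1 - CayleyInv q = (2 : ℝ) • (1 + q)⁻¹ := by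
  apply mul_left_cancel₀ hq
  rw [mul_sub, mul_one, one_add_mul_cayleyInv hq, mul_smul_comm, mul_inv_cancel₀ hq]
  module

lemma one_add_cayleyInv (hq : 1 + q ≠ 0) :
    1 + CayleyInv q = (2 : ℝ) • ((1 + q)⁻¹ * q) := by
  apply mul_left_cancel₀ hq
  rw [mul_add, mul_one, one_add_mul_cayleyInv hq, mul_smul_comm, mul_inv_cancel_left₀ hq]
  module

lemma norm_one_sub_cayleyInv_sq (hq : 1 + q ≠ 0) :
    ‖1 - CayleyInv q‖ ^ 2 = 4 / ‖1 + q‖ ^ 2 := by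
  rw [one_sub_cayleyInv hq, norm_smul, norm_inv, Real.norm_ofNat]
  ring

lemma norm_one_add_cayleyInv_sq (hq : 1 + q ≠ 0) :
    ‖1 + CayleyInv q‖ ^ 2 = 4 / ‖1 + q‖ ^ 2 * ‖q‖ ^ 2 := by
  rw [one_add_cayleyInv hq, norm_smul, norm_mul, norm_inv, Real.norm_ofNat]
  ring

lemma one_sub_norm_cayleyInv_sq (hq : 1 + q ≠ 0) :
    1 - ‖CayleyInv q‖ ^ 2 = 4 / ‖1 + q‖ ^ 2 * q.re := by
  have hnorm : ‖1 + q‖ ≠ 0 := norm_ne_zero_iff.mpr hq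
  rw [CayleyInv, norm_mul, norm_inv, norm_sub_rev]
  field_simp
  rw [norm_one_add_sq, norm_one_sub_sq]
  ring

lemma norm_cayleyInv_lt_one (hq : 0 < q.re) : ‖CayleyInv q‖ < 1 := by
  have hq1 := one_add_ne_zero_of_re_pos hq
  have hpos : 0 < 1 - ‖CayleyInv q‖ ^ 2 := by
    rw [one_sub_norm_cayleyInv_sq hq1]
    have := norm_pos_iff.mpr hq1
    positivity
  exact (sq_lt_one_iff₀ (norm_nonneg _)).mp (sub_pos.mp hpos)

end CayleyInv

section Kernels

variable {w z : ℍ}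

lemma one_sub_cayleyInv_mul_cayleyInv (hz : 1 + z ≠ 0) (hw : 1 + w ≠ 0) :
    1 - CayleyInv z * CayleyInv w = (2 : ℝ) • ((1 + z)⁻¹ * (z + w) * (1 + w)⁻¹) := by
  rw [← sub_sub_cancel 1 (CayleyInv z), ← sub_sub_cancel 1 (CayleyInv w), one_sub_cayleyInv hz,
    one_sub_cayleyInv hw]
  calc 1 - (1 - (2 : ℝ) • (1 + z)⁻¹) * (1 - (2 : ℝ) • (1 + w)⁻¹)
      = (2 : ℝ) • ((1 + z)⁻¹ + (1 + w)⁻¹ - (1 + z)⁻¹ * 2 * (1 + w)⁻¹) := by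
        simp only [two_smul]
        noncomm_ring
    _ = (2 : ℝ) • ((1 + z)⁻¹ * (z + w) * (1 + w)⁻¹) := by
        rw [inv_add_inv' hz hw]
        noncomm_ring

lemma one_add_sq_mul_kernBallDenom_cayleyInv (p : ℍ) (hz : 1 + z ≠ 0) :
    (1 + z) ^ 2 * kernBallDenom p (CayleyInv z) =
      ‖1 - p‖ ^ 2 • z ^ 2 + (2 * (1 - ‖p‖ ^ 2)) • z + ((‖1 + p‖ ^ 2 : ℝ) : ℍ) := by
  have hlin : (1 + z) ^ 2 * CayleyInv z = z ^ 2 - 1 := by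
    rw [sq, mul_assoc, one_add_mul_cayleyInv hz]
    noncomm_ring
  have hquad : (1 + z) ^ 2 * CayleyInv z ^ 2 = (z - 1) ^ 2 := by
    rw [← (commute_one_add_cayleyInv z).mul_pow, one_add_mul_cayleyInv hz]
  calc (1 + z) ^ 2 * kernBallDenom p (CayleyInv z)
      = (1 + z) ^ 2 - (2 * p.re) • ((1 + z) ^ 2 * CayleyInv z)
          + ‖p‖ ^ 2 • ((1 + z) ^ 2 * CayleyInv z ^ 2) := by
        rw [kernBallDenom, Quaternion.mul_coe_eq_smul, Quaternion.mul_coe_eq_smul, mul_add, mul_sub,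
          mul_one, two_mul, mul_smul_comm, mul_smul_comm, mul_add]
        module
    _ = (1 + 2 * z + z ^ 2) - (2 * p.re) • (z ^ 2 - 1) + ‖p‖ ^ 2 • (z ^ 2 - 2 * z + 1) := by
        rw [hlin, hquad]
        noncomm_ring
    _ = ‖1 - p‖ ^ 2 • z ^ 2 + (2 * (1 - ‖p‖ ^ 2)) • z + ((‖1 + p‖ ^ 2 : ℝ) : ℍ) := by
        rw [norm_one_sub_sq, norm_one_add_sq, two_mul, ← mul_one ((_ : ℝ) : ℍ),
          Quaternion.coe_mul_eq_smul]
        module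

lemma kernBallDenom_cayleyInv (hz : 1 + z ≠ 0) (hw : 1 + w ≠ 0) :
    kernBallDenom (CayleyInv w) (CayleyInv z) =
      (4 / ‖1 + w‖ ^ 2) • ((1 + z)⁻¹ ^ 2 * kernHalfDenom w z) := by
  rw [← mul_smul_comm, inv_pow, eq_inv_mul_iff_mul_eq₀ (pow_ne_zero 2 hz),
    one_add_sq_mul_kernBallDenom_cayleyInv _ hz, norm_one_sub_cayleyInv_sq hw,
    one_sub_norm_cayleyInv_sq hw, norm_one_add_cayleyInv_sq hw, kernHalfDenom_eq,
    ← Quaternion.smul_coe]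
  module

lemma kernBall_cayleyInv (hz : 1 + z ≠ 0) (hw : 1 + w ≠ 0) :
    kernBall (CayleyInv w) (CayleyInv z) =
      (1 / 2 : ℝ) • ((1 + z) * kernHalf w z * (1 + star w)) := by
  set D := kernHalfDenom w z
  have hcomm : Commute (1 + z) D⁻¹ :=
    ((Commute.one_left D).add_left (commute_kernHalfDenom w z)).inv_right₀
  have hstar : 1 + star w = ‖1 + w‖ ^ 2 • (1 + w)⁻¹ := by
    rw [norm_sq_smul_inv_eq_star, star_add, star_one]
  calc kernBall (CayleyInv w) (CayleyInv z)
      = (kernBallDenom (CayleyInv w) (CayleyInv z))⁻¹ * (1 - CayleyInv z * CayleyInv w) := rfl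
    _ = ((4 / ‖1 + w‖ ^ 2)⁻¹ • (D⁻¹ * (1 + z) ^ 2)) *
          ((2 : ℝ) • ((1 + z)⁻¹ * (z + w) * (1 + w)⁻¹)) := by
        rw [kernBallDenom_cayleyInv hz hw, one_sub_cayleyInv_mul_cayleyInv hz hw, smul_inv₀,
          mul_inv_rev, inv_pow, inv_inv]
    _ = ((1 / 2) * ‖1 + w‖ ^ 2) • (D⁻¹ * (1 + z) * (z + w) * (1 + w)⁻¹) := by
        rw [smul_mul_smul_comm, sq (1 + z), inv_div]
        simp only [mul_assoc, mul_inv_cancel_left₀ hz]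
        congr 1
        ring
    _ = (1 / 2 : ℝ) • ((1 + z) * D⁻¹ * (z + w) * (‖1 + w‖ ^ 2 • (1 + w)⁻¹)) := by
        rw [hcomm.eq, mul_smul_comm, smul_smul]
    _ = (1 / 2 : ℝ) • ((1 + z) * kernHalf w z * (1 + star w)) := by
        rw [hstar, mul_assoc (1 + z)]; rfl

end Kernels

/-- The reproducing kernel of `H²(𝔹)` is a rescaling of the reproducing kernel of
`H²(ℍ⁺)`: for `z, w` in the right half-space,
`k_𝔹(C⁻¹(w), C⁻¹(z)) = (1/2)·(1 + z)·k_{ℍ⁺}(w, z)·(1 + conj(w))`; moreover all the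
quaternions inverted here are invertible: `‖C⁻¹(z)‖, ‖C⁻¹(w)‖ < 1` and
`z² + 2 Re(w) z + ‖w‖² ≠ 0`. -/
theorem kernBall_cayley_rescaling (z w : ℍ) (hz : 0 < z.re) (hw : 0 < w.re) :
    ‖CayleyInv z‖ < 1 ∧ ‖CayleyInv w‖ < 1 ∧
    (z ^ 2 + 2 * (w.re : ℍ) * z + ((‖w‖ ^ 2 : ℝ) : ℍ)) ≠ 0 ∧
    kernBall (CayleyInv w) (CayleyInv z) =
      ((1 / 2 : ℝ) : ℍ) * ((1 + z) * kernHalf w z * (1 + star w)) := by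
  refine ⟨norm_cayleyInv_lt_one hz, norm_cayleyInv_lt_one hw, kernHalfDenom_ne_zero hw.le hz, ?_⟩
  rw [Quaternion.coe_mul_eq_smul]
  exact kernBall_cayleyInv (one_add_ne_zero_of_re_pos hz) (one_add_ne_zero_of_re_pos hw)
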